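/- Suppose the feasible allocation x satisfies the Nashian Greedy condition and the valuations have unit monopolist utilities. Let x* be any feasible allocation and U*_a = ∫_0^T v a s · x*_a s ds. Then for every t ∈ [0,T], every W > 0, every β > 0, and every subset S ⊆ {a : U a t ≤ β·W}: (1/n) ∑_{a∈S} U*_a ≤ β · log(n+1) · W + (1/n) ∑_{a∈S} (1 − ∫_0^t v a s ds). -/

import Mathlib

open MeasureTheory Real

/-!
Let `m s = ∑ b, v b s * x b s / U b s`. The greedy allocation gives the whole unit to agents
maximising `v b s / U b s`, so `m s` is this maximum and `v a s ≤ U a s * m s` for every agent `a`.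
For `a ∈ S` and `s ≤ t` the utility `U a s` is at most `U a t ≤ β * W`, hence any feasible `xstar`
satisfies `∑ a ∈ S, v a s * xstar a s ≤ β * W * m s`.

On `[0, t]` the function `m` is a.e. the derivative of `∑ b, log (U b)`, which is absolutely
continuous, so it integrates to `∑ b, log (U b t / U b 0)`; each `U b` rises from `1 / n` to at
most `1 / n + 1`, which bounds the integral by `n * log (n + 1)`. On `[t, T]` no agent gets more
than the whole unit.
-/

section LogarithmicIntegral

open Set

variable {a b : ℝ}

lemma absolutelyContinuousOnInterval_comp_of_lipschitzOnWith {X Y : Type*} [PseudoMetricSpace X]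
    [PseudoMetricSpace Y] {f : ℝ → X} {g : X → Y} {K : NNReal}
    (hg : LipschitzOnWith K g (f '' uIcc a b)) (hf : AbsolutelyContinuousOnInterval f a b) :
    AbsolutelyContinuousOnInterval (g ∘ f) a b := by
  have hKf := Filter.Tendsto.const_mul (K : ℝ) hf
  rw [mul_zero] at hKf
  refine squeeze_zero' (.of_forall fun E => Finset.sum_nonneg fun i _ => dist_nonneg) ?_ hKf
  filter_upwards [Filter.mem_inf_of_right (Filter.mem_principal_self _)] with E hE
  rw [Finset.mul_sum]
  refine Finset.sum_le_sum fun i hi => ?_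
  obtain ⟨hleft, hright⟩ := hE.1 i hi
  exact hg.dist_le_mul _ (mem_image_of_mem f hleft) _ (mem_image_of_mem f hright)

lemma absolutelyContinuousOnInterval_comp_of_contDiffOn {E : Type*} [NormedAddCommGroup E]
    [NormedSpace ℝ E] {f : ℝ → ℝ} {g : ℝ → E} (hg : ContDiffOn ℝ 1 g (f '' uIcc a b))
    (hf : AbsolutelyContinuousOnInterval f a b) :
    AbsolutelyContinuousOnInterval (g ∘ f) a b := by
  have hconvex : Convex ℝ (f '' uIcc a b) :=
    (isPreconnected_uIcc.image f hf.continuousOn).ordConnected.convex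
  have hcompact : IsCompact (f '' uIcc a b) := isCompact_uIcc.image_of_continuousOn hf.continuousOn
  obtain ⟨K, hK⟩ := hg.exists_lipschitzOnWith (by decide) hconvex hcompact
  exact absolutelyContinuousOnInterval_comp_of_lipschitzOnWith hK hf

lemma absolutelyContinuousOnInterval_log {f : ℝ → ℝ} (hf : AbsolutelyContinuousOnInterval f a b)
    (hf0 : ∀ s ∈ uIcc a b, f s ≠ 0) :
    AbsolutelyContinuousOnInterval (fun s => log (f s)) a b := by
  refine absolutelyContinuousOnInterval_comp_of_contDiffOn (g := log)
    (contDiffOn_log.mono ?_) hf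
  rintro _ ⟨s, hs, rfl⟩
  exact hf0 s hs

variable {u : ℝ → ℝ} {c : ℝ}

lemma absolutelyContinuousOnInterval_const_add_integral (hu : IntervalIntegrable u volume a b)
    (c : ℝ) : AbsolutelyContinuousOnInterval (fun s => c + ∫ r in a..s, u r) a b :=
  (LipschitzWith.const c).lipschitzOnWith.absolutelyContinuousOnInterval.fun_add
    (hu.absolutelyContinuousOnInterval_intervalIntegral left_mem_uIcc)

lemma intervalIntegrable_div_const_add_integral (hu : IntervalIntegrable u volume a b)
    (hc : ∀ s ∈ uIcc a b, c + ∫ r in a..s, u r ≠ 0) :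
    IntervalIntegrable (fun s => u s / (c + ∫ r in a..s, u r)) volume a b := by
  simp only [div_eq_mul_inv]
  exact hu.mul_continuousOn
    ((absolutelyContinuousOnInterval_const_add_integral hu c).continuousOn.inv₀ hc)

lemma integral_div_const_add_integral (hu : IntervalIntegrable u volume a b)
    (hc : ∀ s ∈ uIcc a b, c + ∫ r in a..s, u r ≠ 0) :
    ∫ s in a..b, u s / (c + ∫ r in a..s, u r) = log ((c + ∫ r in a..b, u r) / c) := by
  have hlog := absolutelyContinuousOnInterval_log
    (absolutelyContinuousOnInterval_const_add_integral hu c) hc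
  have hderiv : ∀ᵐ s, s ∈ uIoc a b →
      u s / (c + ∫ r in a..s, u r) = deriv (fun s => log (c + ∫ r in a..s, u r)) s := by
    filter_upwards [hu.ae_hasDerivAt_integral] with s hs hsab
    have hs' := uIoc_subset_uIcc hsab
    exact (((hs hs' a left_mem_uIcc).const_add c).log (hc s hs')).deriv.symm
  have hc0 : c ≠ 0 := by simpa using hc a left_mem_uIcc
  rw [intervalIntegral.integral_congr_ae hderiv, hlog.integral_deriv_eq_sub,
    log_div (hc b right_mem_uIcc) hc0]
  simp

end LogarithmicIntegral

section SubintervalIntegrals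

open Set

variable {f : ℝ → ℝ} {μ : Measure ℝ} {a b p q : ℝ}

lemma intervalIntegrable_of_mem_Icc (hf : IntegrableOn f (Icc a b) μ) (hp : p ∈ Icc a b)
    (hq : q ∈ Icc a b) : IntervalIntegrable f μ p q :=
  (hf.mono_set (uIcc_subset_Icc hp hq)).intervalIntegrable

lemma monotoneOn_integral_of_ae_nonneg (hf : IntegrableOn f (Icc a b) μ)
    (hf0 : ∀ᵐ s ∂(μ.restrict (Icc a b)), 0 ≤ f s) :
    MonotoneOn (fun t => ∫ s in a..t, f s ∂μ) (Icc a b) := by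
  intro p hp q hq hpq
  refine intervalIntegral.integral_mono_interval le_rfl hp.1 hpq ?_
    (intervalIntegrable_of_mem_Icc hf (left_mem_Icc.2 (hp.1.trans hp.2)) hq)
  exact ae_restrict_of_ae_restrict_of_subset
    (Ioc_subset_Icc_self.trans (Icc_subset_Icc_right hq.2)) hf0

end SubintervalIntegrals

section GreedyChoice

variable {ι K : Type*} [Fintype ι] [Field K] [LinearOrder K] [IsStrictOrderedRing K]
  {v x y U : ι → K}

lemma le_mul_sum_div_of_greedy (hx0 : ∀ a, 0 ≤ x a) (hx1 : ∑ a, x a = 1) (hU : ∀ a, 0 < U a)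
    (hgreedy : ∀ a b, 0 < x a → v b * U a ≤ v a * U b) (a : ι) :
    v a ≤ U a * ∑ b, v b * x b / U b := by
  have hshare : ∀ b, v a * x b ≤ U a * (v b * x b / U b) := by
    intro b
    obtain hb | hb := (hx0 b).eq_or_lt
    · simp [← hb]
    · rw [← mul_div_assoc, le_div_iff₀ (hU b)]
      calc v a * x b * U b = v a * U b * x b := by ring
        _ ≤ v b * U a * x b := mul_le_mul_of_nonneg_right (hgreedy b a hb) hb.le
        _ = U a * (v b * x b) := by ring
  calc v a = ∑ b, v a * x b := by rw [← Finset.mul_sum, hx1, mul_one]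
    _ ≤ ∑ b, U a * (v b * x b / U b) := Finset.sum_le_sum fun b _ => hshare b
    _ = U a * ∑ b, v b * x b / U b := (Finset.mul_sum ..).symm

lemma sum_mul_le_of_le {S : Finset ι} {B : K} (hB : 0 ≤ B) (hv : ∀ a ∈ S, v a ≤ B)
    (hy0 : ∀ a, 0 ≤ y a) (hy1 : ∑ a, y a ≤ 1) : ∑ a ∈ S, v a * y a ≤ B :=
  calc ∑ a ∈ S, v a * y a ≤ ∑ a ∈ S, B * y a :=
        Finset.sum_le_sum fun a ha => mul_le_mul_of_nonneg_right (hv a ha) (hy0 a)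
    _ = B * ∑ a ∈ S, y a := (Finset.mul_sum ..).symm
    _ ≤ B * ∑ a, y a := mul_le_mul_of_nonneg_left
        (Finset.sum_le_univ_sum_of_nonneg hy0) hB
    _ ≤ B := mul_le_of_le_one_right hB hy1

lemma sum_mul_le_mul_sum_div_of_greedy (hv : ∀ a, 0 ≤ v a) (hx0 : ∀ a, 0 ≤ x a)
    (hx1 : ∑ a, x a = 1) (hU : ∀ a, 0 < U a)
    (hgreedy : ∀ a b, 0 < x a → v b * U a ≤ v a * U b) (hy0 : ∀ a, 0 ≤ y a)
    (hy1 : ∑ a, y a ≤ 1) {S : Finset ι} {C : K} (hC : 0 ≤ C) (hS : ∀ a ∈ S, U a ≤ C) :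
    ∑ a ∈ S, v a * y a ≤ C * ∑ b, v b * x b / U b := by
  have hm : 0 ≤ ∑ b, v b * x b / U b :=
    Finset.sum_nonneg fun b _ => div_nonneg (mul_nonneg (hv b) (hx0 b)) (hU b).le
  refine sum_mul_le_of_le (mul_nonneg hC hm) (fun a ha => ?_) hy0 hy1
  exact (le_mul_sum_div_of_greedy hx0 hx1 hU hgreedy a).trans
    (mul_le_mul_of_nonneg_right (hS a ha) hm)

end GreedyChoice

section Allocation

open Set

variable {ι : Type*}

/-- A valuation over the horizon `[0, T]`: an integrable density of the value an agent gets from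
receiving the whole unit, nonnegative almost everywhere. -/
structure IsValuation (T : ℝ) (f : ℝ → ℝ) : Prop where
  integrableOn : IntegrableOn f (Icc 0 T)
  ae_nonneg : ∀ᵐ s ∂(volume.restrict (Icc 0 T)), 0 ≤ f s

/-- The utility accumulated by agent `a` up to time `t` on top of the base utility `c a`. -/
noncomputable def utility (c : ι → ℝ) (v x : ι → ℝ → ℝ) (a : ι) (t : ℝ) : ℝ :=
  c a + ∫ s in (0 : ℝ)..t, v a s * x a s

variable [Fintype ι]

/-- A feasible online allocation of one unit per time over the horizon `[0, T]`: agent `a`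
receives the share `x a s` at time `s`, and part of the unit may be left unallocated. -/
structure IsFeasibleAllocation (T : ℝ) (x : ι → ℝ → ℝ) : Prop where
  aestronglyMeasurable : ∀ a, AEStronglyMeasurable (x a) (volume.restrict (Icc 0 T))
  ae_nonneg_sum_le_one :
    ∀ᵐ s ∂(volume.restrict (Icc 0 T)), (∀ a, 0 ≤ x a s) ∧ ∑ a, x a s ≤ 1

/-- The Nashian Greedy condition on `[0, T]`: the whole unit is allocated, and only to agents
maximising the ratio of current value to current utility. The ratios are compared
cross-multiplied, which avoids dividing by a utility that may vanish. -/
def IsNashianGreedy (T : ℝ) (c : ι → ℝ) (v x : ι → ℝ → ℝ) : Prop :=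
  ∀ᵐ s ∂(volume.restrict (Icc 0 T)), ∑ a, x a s = 1 ∧
    ∀ a b, 0 < x a s → v b s * utility c v x a s ≤ v a s * utility c v x b s

variable {T t : ℝ} {c : ι → ℝ} {v x y : ι → ℝ → ℝ}

lemma IsValuation.mono {f : ℝ → ℝ} (hf : IsValuation T f) (ht : t ≤ T) : IsValuation t f where
  integrableOn := hf.integrableOn.mono_set (Icc_subset_Icc_right ht)
  ae_nonneg := ae_restrict_of_ae_restrict_of_subset (Icc_subset_Icc_right ht) hf.ae_nonneg

lemma IsNashianGreedy.mono (h : IsNashianGreedy T c v x) (ht : t ≤ T) :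
    IsNashianGreedy t c v x :=
  ae_restrict_of_ae_restrict_of_subset (Icc_subset_Icc_right ht) h

namespace IsFeasibleAllocation

lemma mono (hx : IsFeasibleAllocation T x) (ht : t ≤ T) : IsFeasibleAllocation t x where
  aestronglyMeasurable a := (hx.aestronglyMeasurable a).mono_set (Icc_subset_Icc_right ht)
  ae_nonneg_sum_le_one :=
    ae_restrict_of_ae_restrict_of_subset (Icc_subset_Icc_right ht) hx.ae_nonneg_sum_le_one

lemma ae_mem_Icc (hx : IsFeasibleAllocation T x) (a : ι) :
    ∀ᵐ s ∂(volume.restrict (Icc 0 T)), x a s ∈ Icc 0 1 := by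
  filter_upwards [hx.ae_nonneg_sum_le_one] with s ⟨hs0, hs1⟩
  exact ⟨hs0 a, (Finset.single_le_sum (fun b _ => hs0 b) (Finset.mem_univ a)).trans hs1⟩

lemma integrableOn_mul (hx : IsFeasibleAllocation T x) {a : ι} {f : ℝ → ℝ}
    (hf : IntegrableOn f (Icc 0 T)) : IntegrableOn (fun s => f s * x a s) (Icc 0 T) := by
  refine hf.mul_bdd (c := 1) (hx.aestronglyMeasurable a) ?_
  filter_upwards [hx.ae_mem_Icc a] with s hs
  rw [norm_of_nonneg hs.1]
  exact hs.2

lemma ae_mul_nonneg (hx : IsFeasibleAllocation T x) {a : ι} {f : ℝ → ℝ}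
    (hf0 : ∀ᵐ s ∂(volume.restrict (Icc 0 T)), 0 ≤ f s) :
    ∀ᵐ s ∂(volume.restrict (Icc 0 T)), 0 ≤ f s * x a s := by
  filter_upwards [hf0, hx.ae_mem_Icc a] with s hfs hs using mul_nonneg hfs hs.1

lemma integral_mul_le (hx : IsFeasibleAllocation T x) {a : ι} {f : ℝ → ℝ}
    (hf : IsValuation T f) {p q : ℝ} (hp : p ∈ Icc 0 T) (hq : q ∈ Icc 0 T) (hpq : p ≤ q) :
    ∫ s in p..q, f s * x a s ≤ ∫ s in p..q, f s := by
  refine intervalIntegral.integral_mono_ae_restrict hpq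
    (intervalIntegrable_of_mem_Icc (hx.integrableOn_mul hf.integrableOn) hp hq)
    (intervalIntegrable_of_mem_Icc hf.integrableOn hp hq)
    (ae_restrict_of_ae_restrict_of_subset (Icc_subset_Icc hp.1 hq.2) ?_)
  filter_upwards [hf.ae_nonneg, hx.ae_mem_Icc a] with s hfs hs
  exact mul_le_of_le_one_right hfs hs.2

lemma integral_mul_le_integral_mul_add (hx : IsFeasibleAllocation T x) {a : ι} {f : ℝ → ℝ}
    (hf : IsValuation T f) (ht : t ∈ Icc 0 T) :
    ∫ s in 0..T, f s * x a s ≤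
      (∫ s in 0..t, f s * x a s) + ((∫ s in 0..T, f s) - ∫ s in 0..t, f s) := by
  have hT : 0 ≤ T := ht.1.trans ht.2
  have h0 : (0 : ℝ) ∈ Icc 0 T := left_mem_Icc.2 hT
  have hTT : T ∈ Icc 0 T := right_mem_Icc.2 hT
  have hfx := hx.integrableOn_mul (a := a) hf.integrableOn
  rw [← intervalIntegral.integral_add_adjacent_intervals
      (intervalIntegrable_of_mem_Icc hfx h0 ht) (intervalIntegrable_of_mem_Icc hfx ht hTT),
    intervalIntegral.integral_interval_sub_left
      (intervalIntegrable_of_mem_Icc hf.integrableOn h0 hTT)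
      (intervalIntegrable_of_mem_Icc hf.integrableOn h0 ht)]
  gcongr
  exact hx.integral_mul_le hf ht hTT ht.2

lemma utility_monotoneOn (hx : IsFeasibleAllocation T x) (c : ι → ℝ) {a : ι}
    (hv : IsValuation T (v a)) : MonotoneOn (utility c v x a) (Icc 0 T) :=
  (monotoneOn_integral_of_ae_nonneg (hx.integrableOn_mul hv.integrableOn)
    (hx.ae_mul_nonneg hv.ae_nonneg)).const_add (c a)

lemma utility_pos (hx : IsFeasibleAllocation T x) {a : ι} (hc : 0 < c a)
    (hv : IsValuation T (v a)) (ht : t ∈ Icc 0 T) : 0 < utility c v x a t := by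
  have h0 : (0 : ℝ) ∈ Icc 0 T := left_mem_Icc.2 (ht.1.trans ht.2)
  calc 0 < c a := hc
    _ = utility c v x a 0 := by simp [utility]
    _ ≤ utility c v x a t := hx.utility_monotoneOn c hv h0 ht ht.1

lemma utility_le (hx : IsFeasibleAllocation T x) (c : ι → ℝ) {a : ι}
    (hv : IsValuation T (v a)) (ht : t ∈ Icc 0 T) :
    utility c v x a t ≤ c a + ∫ s in 0..T, v a s := by
  have hT : 0 ≤ T := ht.1.trans ht.2
  refine (hx.utility_monotoneOn c hv ht (right_mem_Icc.2 hT) ht.2).trans ?_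
  exact add_le_add_right
    (hx.integral_mul_le hv (left_mem_Icc.2 hT) (right_mem_Icc.2 hT) hT) (c a)

lemma log_utility_div_le (hx : IsFeasibleAllocation T x) {a : ι} (hc : 0 < c a)
    (hv : IsValuation T (v a)) (ht : t ∈ Icc 0 T) :
    log (utility c v x a t / c a) ≤ log (1 + (∫ s in 0..T, v a s) / c a) := by
  refine log_le_log (div_pos (hx.utility_pos hc hv ht) hc) ?_
  rw [← div_self hc.ne', ← add_div]
  exact div_le_div_of_nonneg_right (hx.utility_le c hv ht) hc.le

lemma utility_ne_zero_on_uIcc (hx : IsFeasibleAllocation T x) (hT : 0 ≤ T) {a : ι} (hc : 0 < c a)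
    (hv : IsValuation T (v a)) : ∀ s ∈ uIcc 0 T, utility c v x a s ≠ 0 := by
  rw [uIcc_of_le hT]
  exact fun s hs => (hx.utility_pos hc hv hs).ne'

lemma intervalIntegrable_mul (hx : IsFeasibleAllocation T x) (hT : 0 ≤ T) {a : ι} {f : ℝ → ℝ}
    (hf : IntegrableOn f (Icc 0 T)) : IntervalIntegrable (fun s => f s * x a s) volume 0 T :=
  intervalIntegrable_of_mem_Icc (hx.integrableOn_mul hf) (left_mem_Icc.2 hT) (right_mem_Icc.2 hT)

lemma intervalIntegrable_div_utility (hx : IsFeasibleAllocation T x) (hT : 0 ≤ T) {a : ι}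
    (hc : 0 < c a) (hv : IsValuation T (v a)) :
    IntervalIntegrable (fun s => v a s * x a s / utility c v x a s) volume 0 T :=
  intervalIntegrable_div_const_add_integral (hx.intervalIntegrable_mul hT hv.integrableOn)
    (hx.utility_ne_zero_on_uIcc hT hc hv)

lemma integral_div_utility (hx : IsFeasibleAllocation T x) (hT : 0 ≤ T) {a : ι}
    (hc : 0 < c a) (hv : IsValuation T (v a)) :
    ∫ s in 0..T, v a s * x a s / utility c v x a s = log (utility c v x a T / c a) :=
  integral_div_const_add_integral (hx.intervalIntegrable_mul hT hv.integrableOn)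
    (hx.utility_ne_zero_on_uIcc hT hc hv)

end IsFeasibleAllocation

namespace IsNashianGreedy

lemma ae_sum_mul_le (hg : IsNashianGreedy T c v x) (hc : ∀ a, 0 < c a)
    (hv : ∀ a, IsValuation T (v a)) (hx : IsFeasibleAllocation T x)
    (hy : IsFeasibleAllocation T y) {C : ℝ} (hC : 0 ≤ C) {S : Finset ι}
    (hS : ∀ a ∈ S, utility c v x a T ≤ C) :
    ∀ᵐ s ∂(volume.restrict (Icc 0 T)),
      ∑ a ∈ S, v a s * y a s ≤ C * ∑ b, v b s * x b s / utility c v x b s := by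
  filter_upwards [hg, ae_all_iff.2 fun a => (hv a).ae_nonneg, hx.ae_nonneg_sum_le_one,
    hy.ae_nonneg_sum_le_one, ae_restrict_mem measurableSet_Icc]
    with s ⟨hgs1, hgs⟩ hvs ⟨hxs0, _⟩ ⟨hys0, hys1⟩ hs
  refine sum_mul_le_mul_sum_div_of_greedy (v := (v · s)) (x := (x · s)) (y := (y · s))
    (U := (utility c v x · s)) hvs hxs0 hgs1 (fun a => hx.utility_pos (hc a) (hv a) hs)
    hgs hys0 hys1 hC fun a ha => ?_
  have hT : T ∈ Icc 0 T := right_mem_Icc.2 (hs.1.trans hs.2)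
  exact (hx.utility_monotoneOn c (hv a) hs hT hs.2).trans (hS a ha)

lemma sum_integral_mul_le (hg : IsNashianGreedy T c v x) (hT : 0 ≤ T) (hc : ∀ a, 0 < c a)
    (hv : ∀ a, IsValuation T (v a)) (hx : IsFeasibleAllocation T x)
    (hy : IsFeasibleAllocation T y) {C : ℝ} (hC : 0 ≤ C) {S : Finset ι}
    (hS : ∀ a ∈ S, utility c v x a T ≤ C) :
    ∑ a ∈ S, ∫ s in 0..T, v a s * y a s ≤ C * ∑ b, log (utility c v x b T / c b) := by
  have hvy : ∀ a ∈ S, IntervalIntegrable (fun s => v a s * y a s) volume 0 T :=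
    fun a _ => hy.intervalIntegrable_mul hT (hv a).integrableOn
  have hvxU : ∀ b ∈ Finset.univ,
      IntervalIntegrable (fun s => v b s * x b s / utility c v x b s) volume 0 T :=
    fun b _ => hx.intervalIntegrable_div_utility hT (hc b) (hv b)
  have hsum_vy : IntervalIntegrable (fun s => ∑ a ∈ S, v a s * y a s) volume 0 T := by
    simpa only [Finset.sum_fn] using IntervalIntegrable.sum S hvy
  have hsum_vxU : IntervalIntegrable
      (fun s => ∑ b, v b s * x b s / utility c v x b s) volume 0 T := by
    simpa only [Finset.sum_fn] using IntervalIntegrable.sum Finset.univ hvxU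
  calc ∑ a ∈ S, ∫ s in 0..T, v a s * y a s
      = ∫ s in 0..T, ∑ a ∈ S, v a s * y a s := (intervalIntegral.integral_finsetSum hvy).symm
    _ ≤ ∫ s in 0..T, C * ∑ b, v b s * x b s / utility c v x b s :=
      intervalIntegral.integral_mono_ae_restrict hT hsum_vy (hsum_vxU.const_mul C)
        (hg.ae_sum_mul_le hc hv hx hy hC hS)
    _ = C * ∑ b, ∫ s in 0..T, v b s * x b s / utility c v x b s := by
      rw [intervalIntegral.integral_const_mul, intervalIntegral.integral_finsetSum hvxU]
    _ = C * ∑ b, log (utility c v x b T / c b) := by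
      simp only [hx.integral_div_utility hT (hc _) (hv _)]

end IsNashianGreedy

theorem stmt_5_general (hc : ∀ a, 0 < c a) (hv : ∀ a, IsValuation T (v a))
    (hx : IsFeasibleAllocation T x) (hg : IsNashianGreedy T c v x)
    (hy : IsFeasibleAllocation T y) (ht : t ∈ Icc 0 T) {C : ℝ} (hC : 0 ≤ C) {S : Finset ι}
    (hS : ∀ a ∈ S, utility c v x a t ≤ C) :
    ∑ a ∈ S, ∫ s in 0..T, v a s * y a s ≤
      C * ∑ b, log (1 + (∫ s in 0..T, v b s) / c b) +
        ∑ a ∈ S, ((∫ s in 0..T, v a s) - ∫ s in 0..t, v a s) := by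
  have hbefore : ∑ a ∈ S, ∫ s in 0..t, v a s * y a s ≤
      C * ∑ b, log (utility c v x b t / c b) :=
    (hg.mono ht.2).sum_integral_mul_le ht.1 hc (fun a => (hv a).mono ht.2) (hx.mono ht.2)
      (hy.mono ht.2) hC hS
  have hlog : ∑ b, log (utility c v x b t / c b) ≤ ∑ b, log (1 + (∫ s in 0..T, v b s) / c b) :=
    Finset.sum_le_sum fun b _ => hx.log_utility_div_le (hc b) (hv b) ht
  calc ∑ a ∈ S, ∫ s in 0..T, v a s * y a s
      ≤ ∑ a ∈ S, ((∫ s in 0..t, v a s * y a s) +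
          ((∫ s in 0..T, v a s) - ∫ s in 0..t, v a s)) :=
        Finset.sum_le_sum fun a _ => hy.integral_mul_le_integral_mul_add (hv a) ht
    _ = (∑ a ∈ S, ∫ s in 0..t, v a s * y a s) +
          ∑ a ∈ S, ((∫ s in 0..T, v a s) - ∫ s in 0..t, v a s) := Finset.sum_add_distrib
    _ ≤ _ := add_le_add_left (hbefore.trans (mul_le_mul_of_nonneg_left hlog hC)) _

end Allocation

theorem stmt_5
    (n : ℕ) (hn : 1 ≤ n) (T : ℝ) (hT : 0 < T)
    (v : Fin n → ℝ → ℝ)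
    (hv_meas : ∀ a, Measurable (v a))
    (hv_nonneg : ∀ a, ∀ᵐ s ∂(volume.restrict (Set.Icc (0:ℝ) T)), 0 ≤ v a s)
    (hv_int : ∀ a, IntegrableOn (v a) (Set.Icc (0:ℝ) T))
    (hv_unit : ∀ a, ∫ s in (0:ℝ)..T, v a s = 1)
    (x : Fin n → ℝ → ℝ)
    (hx_meas : ∀ a, Measurable (x a))
    (hx_feas : ∀ᵐ s ∂(volume.restrict (Set.Icc (0:ℝ) T)),
      (∀ a, 0 ≤ x a s) ∧ ∑ a, x a s ≤ 1)
    (U : Fin n → ℝ → ℝ)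
    (hU : ∀ a t, U a t = 1 / (n : ℝ) + ∫ s in (0:ℝ)..t, v a s * x a s)
    (hgreedy : ∀ᵐ s ∂(volume.restrict (Set.Icc (0:ℝ) T)),
      (∑ a, x a s = 1) ∧
      ∀ a b, 0 < x a s → v a s * U b s ≥ v b s * U a s)
    (xstar : Fin n → ℝ → ℝ)
    (hxstar_meas : ∀ a, Measurable (xstar a))
    (hxstar_feas : ∀ᵐ s ∂(volume.restrict (Set.Icc (0:ℝ) T)),
      (∀ a, 0 ≤ xstar a s) ∧ ∑ a, xstar a s ≤ 1)
    (Ustar : Fin n → ℝ)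
    (hUstar : ∀ a, Ustar a = ∫ s in (0:ℝ)..T, v a s * xstar a s) :
    ∀ t ∈ Set.Icc (0:ℝ) T, ∀ W : ℝ, 0 < W → ∀ β : ℝ, 0 < β →
      ∀ S : Finset (Fin n), (∀ a ∈ S, U a t ≤ β * W) →
        (1 / (n : ℝ)) * ∑ a ∈ S, Ustar a ≤
          β * Real.log ((n : ℝ) + 1) * W +
            (1 / (n : ℝ)) * ∑ a ∈ S, (1 - ∫ s in (0:ℝ)..t, v a s) := by
  intro t ht W hW β hβ S hS
  obtain rfl : U = utility (fun _ => 1 / (n : ℝ)) v x := funext₂ hU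
  have hn0 : (0 : ℝ) < n := by exact_mod_cast hn
  have hbound := stmt_5_general (fun _ => one_div_pos.2 hn0) (fun a => ⟨hv_int a, hv_nonneg a⟩)
    ⟨fun a => (hx_meas a).aestronglyMeasurable, hx_feas⟩ hgreedy
    ⟨fun a => (hxstar_meas a).aestronglyMeasurable, hxstar_feas⟩ ht (mul_pos hβ hW).le hS
  simp only [hv_unit, ← hUstar, one_div_one_div, Finset.sum_const, Finset.card_univ,
    Fintype.card_fin, nsmul_eq_mul, add_comm (1 : ℝ) n] at hbound
  calc 1 / (n : ℝ) * ∑ a ∈ S, Ustar a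
      ≤ 1 / (n : ℝ) * (β * W * (n * log (n + 1)) + ∑ a ∈ S, (1 - ∫ s in (0 : ℝ)..t, v a s)) :=
        mul_le_mul_of_nonneg_left hbound (one_div_pos.2 hn0).le
    _ = β * log (n + 1) * W + 1 / (n : ℝ) * ∑ a ∈ S, (1 - ∫ s in (0 : ℝ)..t, v a s) := by
        field_simp
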